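/- Improved Yanase limit for spin measurement under angular momentum conservation (units ℏ = 1): let (ℂᵐ, ξ, U, M) be a finite-dimensional measuring process for ℂ² and L₂ a Hermitian m×m matrix such that U(S_x⊗I + I⊗L₂) = (S_x⊗I + I⊗L₂)U and ML₂ = L₂M, where S_x = (1/2)·[[0,1],[1,0]]. Then there exists a unit vector ψ ∈ ℂ² such that ε(S_z; |ψ⟩⟨ψ|)²·(4 + 16·σ(L₂;|ξ⟩⟨ξ|)²) ≥ 1, where S_z = (1/2)·[[1,0],[0,−1]]. -/

import Mathlib

open ComplexOrder Kronecker Matrix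

/-- The rank-one projection `|ξ⟩⟨ξ|` onto a vector `ξ`. -/
noncomputable def rankOneProj {m : ℕ} (ξ : Fin m → ℂ) : Matrix (Fin m) (Fin m) ℂ :=
  Matrix.vecMulVec ξ (star ξ)

/-- The partial trace over the second tensor factor. -/
noncomputable def trK {n m : ℕ} (X : Matrix (Fin n × Fin m) (Fin n × Fin m) ℂ) :
    Matrix (Fin n) (Fin n) ℂ :=
  Matrix.of fun i j => ∑ k, X (i, k) (j, k)

/-- The noise operator `N(A) = U†(I⊗M)U − A⊗I` of a measuring process. -/
noncomputable def noiseOp {n m : ℕ} (U : Matrix (Fin n × Fin m) (Fin n × Fin m) ℂ)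
    (M : Matrix (Fin m) (Fin m) ℂ) (A : Matrix (Fin n) (Fin n) ℂ) :
    Matrix (Fin n × Fin m) (Fin n × Fin m) ℂ :=
  Uᴴ * ((1 : Matrix (Fin n) (Fin n) ℂ) ⊗ₖ M) * U - A ⊗ₖ (1 : Matrix (Fin m) (Fin m) ℂ)

/-- The disturbance operator `D(B) = U†(B⊗I)U − B⊗I` of a measuring process. -/
noncomputable def distOp {n m : ℕ} (U : Matrix (Fin n × Fin m) (Fin n × Fin m) ℂ)
    (B : Matrix (Fin n) (Fin n) ℂ) :
    Matrix (Fin n × Fin m) (Fin n × Fin m) ℂ :=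
  Uᴴ * (B ⊗ₖ (1 : Matrix (Fin m) (Fin m) ℂ)) * U - B ⊗ₖ (1 : Matrix (Fin m) (Fin m) ℂ)

/-- The rms noise `ε(A;ρ) = (Tr[N(A)²(ρ⊗|ξ⟩⟨ξ|)])^{1/2}`. -/
noncomputable def rmsNoise {n m : ℕ} (U : Matrix (Fin n × Fin m) (Fin n × Fin m) ℂ)
    (M : Matrix (Fin m) (Fin m) ℂ) (ξ : Fin m → ℂ) (A ρ : Matrix (Fin n) (Fin n) ℂ) : ℝ :=
  Real.sqrt ((noiseOp U M A * noiseOp U M A * (ρ ⊗ₖ rankOneProj ξ)).trace.re)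

/-- The rms disturbance `η(B;ρ) = (Tr[D(B)²(ρ⊗|ξ⟩⟨ξ|)])^{1/2}`. -/
noncomputable def rmsDist {n m : ℕ} (U : Matrix (Fin n × Fin m) (Fin n × Fin m) ℂ)
    (ξ : Fin m → ℂ) (B ρ : Matrix (Fin n) (Fin n) ℂ) : ℝ :=
  Real.sqrt ((distOp U B * distOp U B * (ρ ⊗ₖ rankOneProj ξ)).trace.re)

/-- The standard deviation of a Hermitian matrix `C` in the state `τ`:
`σ(C;τ)² = Tr[C²τ] − (Tr[Cτ])²`. -/
noncomputable def stddev {k : ℕ} (C τ : Matrix (Fin k) (Fin k) ℂ) : ℝ :=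
  Real.sqrt ((C * C * τ).trace.re - ((C * τ).trace.re) ^ 2)

/-- The spin-1/2 `x`-component operator (ℏ = 1). -/
noncomputable def Sx : Matrix (Fin 2) (Fin 2) ℂ := !![0, 1/2; 1/2, 0]

/-- The spin-1/2 `z`-component operator (ℏ = 1). -/
noncomputable def Sz : Matrix (Fin 2) (Fin 2) ℂ := !![1/2, 0; 0, -(1/2)]


lemma yan_kron_sub {n m : ℕ} (A : Matrix (Fin n) (Fin n) ℂ) (B C : Matrix (Fin m) (Fin m) ℂ) :
    A ⊗ₖ (B - C) = A ⊗ₖ B - A ⊗ₖ C := by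
  ext ⟨i, k⟩ ⟨j, l⟩
  simp [mul_sub]

lemma yan_sub_kron {n m : ℕ} (A B : Matrix (Fin n) (Fin n) ℂ) (C : Matrix (Fin m) (Fin m) ℂ) :
    (A - B) ⊗ₖ C = A ⊗ₖ C - B ⊗ₖ C := by
  ext ⟨i, k⟩ ⟨j, l⟩
  simp [sub_mul]

lemma yan_trace {n : Type*} [Fintype n] (X : Matrix n n ℂ) (v : n → ℂ) :
    (X * vecMulVec v (star v)).trace = star v ⬝ᵥ X *ᵥ v := by
  rw [Matrix.mul_vecMulVec, Matrix.trace_vecMulVec, dotProduct_comm]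

def yanProd {n m : ℕ} (ψ : Fin n → ℂ) (ξ : Fin m → ℂ) : Fin n × Fin m → ℂ :=
  fun p => ψ p.1 * ξ p.2

lemma yan_kron {n m : ℕ} (ψ : Fin n → ℂ) (ξ : Fin m → ℂ) :
    rankOneProj ψ ⊗ₖ rankOneProj ξ = vecMulVec (yanProd ψ ξ) (star (yanProd ψ ξ)) := by
  ext ⟨i, k⟩ ⟨j, l⟩
  simp [rankOneProj, yanProd, vecMulVec_apply]
  ring

lemma yan_exp {n m : ℕ} (ψ : Fin n → ℂ) (ξ : Fin m → ℂ) (A : Matrix (Fin n) (Fin n) ℂ)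
    (B : Matrix (Fin m) (Fin m) ℂ) :
    star (yanProd ψ ξ) ⬝ᵥ (A ⊗ₖ B) *ᵥ yanProd ψ ξ
      = (star ψ ⬝ᵥ A *ᵥ ψ) * (star ξ ⬝ᵥ B *ᵥ ξ) := by
  rw [← yan_trace, ← yan_kron, ← Matrix.mul_kronecker_mul, Matrix.trace_kronecker,
    rankOneProj, rankOneProj, yan_trace, yan_trace]

lemma yan_herm {n : Type*} [Fintype n] {X Y : Matrix n n ℂ} (hX : X.IsHermitian) (v : n → ℂ) :
    star (X *ᵥ v) ⬝ᵥ (Y *ᵥ v) = star v ⬝ᵥ (X * Y) *ᵥ v := by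
  rw [Matrix.star_mulVec, hX.eq, ← Matrix.dotProduct_mulVec, Matrix.mulVec_mulVec]

lemma yan_cs {n : Type*} [Fintype n] (a b : n → ℂ) :
    ((star a ⬝ᵥ b).im) ^ 2 ≤ (star a ⬝ᵥ a).re * (star b ⬝ᵥ b).re := by
  have h := norm_inner_le_norm (𝕜 := ℂ) (WithLp.toLp 2 a) (WithLp.toLp 2 b)
  have e : ∀ x y : n → ℂ, inner ℂ (WithLp.toLp 2 x) (WithLp.toLp 2 y) = star x ⬝ᵥ y := by
    intro x y
    rw [EuclideanSpace.inner_toLp_toLp, dotProduct_comm]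
  have e2 : ∀ x : n → ℂ, (star x ⬝ᵥ x).re = ‖WithLp.toLp 2 x‖ ^ 2 := by
    intro x
    rw [← e, inner_self_eq_norm_sq_to_K]
    norm_cast
  rw [e] at h
  rw [e2, e2, ← mul_pow, ← sq_abs]
  exact pow_le_pow_left₀ (abs_nonneg _) ((Complex.abs_im_le_norm _).trans h) 2

/-- Robertson-type inequality. -/
lemma yan_rob {n : Type*} [Fintype n] {X Y : Matrix n n ℂ} (hX : X.IsHermitian)
    (hY : Y.IsHermitian) (v : n → ℂ) :
    ((star v ⬝ᵥ (X * Y - Y * X) *ᵥ v).im) ^ 2 ≤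
      4 * ((star v ⬝ᵥ (X * X) *ᵥ v).re * (star v ⬝ᵥ (Y * Y) *ᵥ v).re) := by
  have h := yan_cs (X *ᵥ v) (Y *ᵥ v)
  have h2 : star v ⬝ᵥ (Y * X) *ᵥ v = star (star v ⬝ᵥ (X * Y) *ᵥ v) := by
    rw [← yan_herm hX, ← yan_herm hY, Matrix.star_dotProduct, dotProduct_comm]
  rw [yan_herm hX, yan_herm hX, yan_herm hY] at h
  rw [Matrix.sub_mulVec, dotProduct_sub, h2]
  simp only [Complex.sub_im, Complex.star_def, Complex.conj_im]
  nlinarith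

/-- Improved Yanase limit for spin measurement under angular momentum conservation. -/
theorem improved_yanase_limit {m : ℕ} (hm : 0 < m)
    (ξ : Fin m → ℂ) (hξ : star ξ ⬝ᵥ ξ = 1)
    (U : Matrix (Fin 2 × Fin m) (Fin 2 × Fin m) ℂ)
    (hU : U * Uᴴ = 1) (hU' : Uᴴ * U = 1)
    (M : Matrix (Fin m) (Fin m) ℂ) (hM : M.IsHermitian)
    (L₂ : Matrix (Fin m) (Fin m) ℂ) (hL₂ : L₂.IsHermitian)
    (hcons : U * (Sx ⊗ₖ (1 : Matrix (Fin m) (Fin m) ℂ)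
        + (1 : Matrix (Fin 2) (Fin 2) ℂ) ⊗ₖ L₂)
      = (Sx ⊗ₖ (1 : Matrix (Fin m) (Fin m) ℂ)
        + (1 : Matrix (Fin 2) (Fin 2) ℂ) ⊗ₖ L₂) * U)
    (hML₂ : M * L₂ = L₂ * M) :
    ∃ ψ : Fin 2 → ℂ, star ψ ⬝ᵥ ψ = 1 ∧
      rmsNoise U M ξ Sz (rankOneProj ψ) ^ 2 *
          (4 + 16 * stddev L₂ (rankOneProj ξ) ^ 2) ≥ 1 := by
  set s : ℂ := (((Real.sqrt 2)⁻¹ : ℝ) : ℂ) with hs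
  have hss : s * s = 1 / 2 := by
    rw [hs, ← Complex.ofReal_mul, ← mul_inv, Real.mul_self_sqrt (by norm_num)]
    norm_num
  have hst : (starRingEnd ℂ) s = s := Complex.conj_ofReal _
  set ψ : Fin 2 → ℂ := ![s, s * Complex.I] with hψd
  have hψ : star ψ ⬝ᵥ ψ = 1 := by
    simp [hψd, dotProduct, Fin.sum_univ_two, hst]
    linear_combination 2 * hss - s * s * Complex.I_mul_I
  refine ⟨ψ, hψ, ?_⟩
  set c : ℝ := ((L₂ * rankOneProj ξ).trace).re with hc
  have hcC : star ξ ⬝ᵥ L₂ *ᵥ ξ = (c : ℂ) := by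
    rw [hc, rankOneProj, yan_trace]
    apply Complex.ext
    · simp
    · simpa using hL₂.im_star_dotProduct_mulVec_self ξ
  set K : Matrix (Fin m) (Fin m) ℂ := L₂ - (c : ℂ) • 1 with hK
  have hSx : Sx.IsHermitian := by
    ext i j; fin_cases i <;> fin_cases j <;> simp [Sx]
  have hSz : Sz.IsHermitian := by
    ext i j; fin_cases i <;> fin_cases j <;> simp [Sz]
  have hKh : K.IsHermitian := by
    unfold Matrix.IsHermitian
    rw [hK, conjTranspose_sub, hL₂.eq, conjTranspose_smul]
    simp
  have hMK : M * K = K * M := by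
    rw [hK, mul_sub, sub_mul, hML₂]; simp
  set Y := Sx ⊗ₖ (1 : Matrix (Fin m) (Fin m) ℂ) + (1 : Matrix (Fin 2) (Fin 2) ℂ) ⊗ₖ K with hY
  have hYL : Y = (Sx ⊗ₖ (1 : Matrix (Fin m) (Fin m) ℂ)
        + (1 : Matrix (Fin 2) (Fin 2) ℂ) ⊗ₖ L₂) - (c : ℂ) • 1 := by
    rw [hY, hK, yan_kron_sub, kronecker_smul, one_kronecker_one]
    abel
  have hUY : U * Y = Y * U := by
    rw [hYL, mul_sub, sub_mul, hcons]; simp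
  have hUY' : Uᴴ * Y = Y * Uᴴ := by
    calc Uᴴ * Y = Uᴴ * Y * (U * Uᴴ) := by rw [hU, mul_one]
      _ = Uᴴ * (Y * U) * Uᴴ := by simp only [mul_assoc]
      _ = Uᴴ * (U * Y) * Uᴴ := by rw [hUY]
      _ = (Uᴴ * U) * Y * Uᴴ := by simp only [mul_assoc]
      _ = Y * Uᴴ := by rw [hU', one_mul]
  have hMY : ((1 : Matrix (Fin 2) (Fin 2) ℂ) ⊗ₖ M) * Y = Y * ((1 : Matrix (Fin 2) (Fin 2) ℂ) ⊗ₖ M) := by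
    rw [hY, mul_add, add_mul]
    simp only [← mul_kronecker_mul, one_mul, mul_one, hMK]
  have hYh : Y.IsHermitian := by
    unfold Matrix.IsHermitian
    rw [hY, conjTranspose_add, conjTranspose_kronecker, conjTranspose_kronecker, hSx.eq, hKh.eq]
    simp
  have hNh : (noiseOp U M Sz).IsHermitian := by
    unfold Matrix.IsHermitian noiseOp
    rw [conjTranspose_sub, conjTranspose_kronecker, hSz.eq, conjTranspose_mul, conjTranspose_mul,
      conjTranspose_kronecker, hM.eq]
    simp [mul_assoc]
  have hcomm : noiseOp U M Sz * Y - Y * noiseOp U M Sz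
      = (Sx * Sz - Sz * Sx) ⊗ₖ (1 : Matrix (Fin m) (Fin m) ℂ) := by
    have h1 : (Uᴴ * ((1 : Matrix (Fin 2) (Fin 2) ℂ) ⊗ₖ M) * U) * Y
        = Y * (Uᴴ * ((1 : Matrix (Fin 2) (Fin 2) ℂ) ⊗ₖ M) * U) := by
      rw [mul_assoc, hUY, ← mul_assoc, mul_assoc Uᴴ, hMY, ← mul_assoc, hUY']
      simp only [mul_assoc]
    unfold noiseOp
    rw [sub_mul, mul_sub, h1, yan_sub_kron, sub_sub_sub_cancel_left, hY, mul_add, add_mul]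
    simp only [← mul_kronecker_mul, one_mul, mul_one]
    abel
  have hrob := yan_rob hNh hYh (yanProd ψ ξ)
  have hξ1 : star ξ ⬝ᵥ (1 : Matrix (Fin m) (Fin m) ℂ) *ᵥ ξ = 1 := by rw [one_mulVec, hξ]
  have hcv : star ψ ⬝ᵥ (Sx * Sz - Sz * Sx) *ᵥ ψ = -(1 / 2) * Complex.I := by
    simp [hψd, Sx, Sz, dotProduct, mulVec, Fin.sum_univ_two, hst, Matrix.mul_apply]
    linear_combination (-Complex.I) * hss
  have hSxv : star ψ ⬝ᵥ Sx *ᵥ ψ = 0 := by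
    simp [hψd, Sx, dotProduct, mulVec, Fin.sum_univ_two, hst]
    ring
  have hSx2 : Sx * Sx = (1 / 4 : ℂ) • 1 := by
    ext i j; fin_cases i <;> fin_cases j <;> simp [Sx, Matrix.mul_apply] <;> norm_num
  have hYY : star (yanProd ψ ξ) ⬝ᵥ (Y * Y) *ᵥ yanProd ψ ξ
      = 1 / 4 + star ξ ⬝ᵥ (K * K) *ᵥ ξ := by
    rw [hY, mul_add, add_mul, add_mul]
    simp only [← mul_kronecker_mul, one_mul, mul_one, add_mulVec, dotProduct_add, yan_exp,
      hSxv, hSx2, smul_mulVec, dotProduct_smul, one_mulVec, hψ, hξ]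
    simp
  have hKK : star ξ ⬝ᵥ (K * K) *ᵥ ξ = star ξ ⬝ᵥ (L₂ * L₂) *ᵥ ξ - (c : ℂ) ^ 2 := by
    rw [hK]
    simp only [mul_sub, sub_mul, smul_mul_assoc, mul_smul_comm, one_mul, mul_one, sub_mulVec,
      dotProduct_sub, smul_mulVec, dotProduct_smul, one_mulVec, hξ, hcC, smul_eq_mul]
    ring
  have hT : (noiseOp U M Sz * noiseOp U M Sz * (rankOneProj ψ ⊗ₖ rankOneProj ξ)).trace
      = star (yanProd ψ ξ) ⬝ᵥ (noiseOp U M Sz * noiseOp U M Sz) *ᵥ yanProd ψ ξ := by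
    rw [yan_kron, yan_trace]
  have hT0 : 0 ≤ (star (yanProd ψ ξ) ⬝ᵥ
      (noiseOp U M Sz * noiseOp U M Sz) *ᵥ yanProd ψ ξ).re := by
    rw [← yan_herm hNh]
    exact (Complex.le_def.1 (dotProduct_star_self_nonneg (star (noiseOp U M Sz *ᵥ yanProd ψ ξ)) |>.trans_eq (by rw [star_star, dotProduct_comm]))).1
  rw [hcomm, yan_exp, hξ1, hcv, hYY, hKK] at hrob
  have hσ : (star ξ ⬝ᵥ (L₂ * L₂) *ᵥ ξ).re - c ^ 2 ≤ stddev L₂ (rankOneProj ξ) ^ 2 := by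
    unfold stddev
    rw [← hc]
    nth_rewrite 1 [rankOneProj]
    rw [yan_trace]
    rcases le_total 0 ((star ξ ⬝ᵥ (L₂ * L₂) *ᵥ ξ).re - c ^ 2) with h | h
    · rw [Real.sq_sqrt h]
    · exact h.trans (sq_nonneg _)
  rw [rmsNoise, hT, Real.sq_sqrt hT0]
  norm_num [← Complex.ofReal_pow] at hrob
  nlinarith [mul_le_mul_of_nonneg_left hσ hT0]
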